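/- Assume the well p₋ is located at the origin and coordinates are chosen so that for some constants λ₁, λ₂ > 0, C > 0 and δ > 0 one has |W(p) − λ₁²p₁² − λ₂²p₂²| ≤ C|p|³ for all |p| ≤ δ. Then the rate of change of d_F-length with respect to enclosed area along the vertical fiber over the well satisfies lim_{α→0} (1/|α|) · inf{ E(γ) : γ : [a,b] → ℝ² locally Lipschitz, γ(a) = γ(b) = (0,0), 𝒜(γ) = α } = λ₁ + λ₂; equivalently, lim_{α→0} d_F((0,0,0),(0,0,α))/|α| = λ₁ + λ₂. -/

import Mathlib

open MeasureTheory Set Filter Topology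
open scoped ENNReal

noncomputable section

/-- The Euclidean norm of a vector in `ℝ × ℝ`. -/
def enorm2 (v : ℝ × ℝ) : ℝ := Real.sqrt (v.1 ^ 2 + v.2 ^ 2)

/-- The degenerate length `E(γ) = ∫ₐᵇ F(γ(t)) |γ'(t)| dt` of a planar curve. -/
def degLen (F : ℝ × ℝ → ℝ) (a b : ℝ) (γ : ℝ → ℝ × ℝ) : ℝ :=
  ∫ t in a..b, F (γ t) * enorm2 (deriv γ t)

/-- The signed area `𝒜(γ) = ∫ₐᵇ γ¹(t) (γ²)'(t) dt` of a planar curve. -/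
def sArea (a b : ℝ) (γ : ℝ → ℝ × ℝ) : ℝ :=
  ∫ t in a..b, (γ t).1 * deriv (fun s => (γ s).2) t

/-- A locally Lipschitz curve on `[a,b]` joining `p` to `q`. -/
def IsCurve (a b : ℝ) (γ : ℝ → ℝ × ℝ) (p q : ℝ × ℝ) : Prop :=
  a ≤ b ∧ LocallyLipschitz γ ∧ γ a = p ∧ γ b = q

/-- The standing hypotheses on the potential `W`: smooth, nonnegative, vanishing exactly at the
two distinct wells `pm` and `pp`, with positive definite Hessians there, and bounded away from
zero near infinity (`liminf_{|p|→∞} W(p) > 0`). -/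
structure TwoWell (W : ℝ × ℝ → ℝ) (pm pp : ℝ × ℝ) : Prop where
  smooth : ContDiff ℝ (⊤ : ℕ∞) W
  nonneg : ∀ p, 0 ≤ W p
  wells_ne : pm ≠ pp
  zeroSet : ∀ p, W p = 0 ↔ p = pm ∨ p = pp
  hess_m : ∀ v : ℝ × ℝ, v ≠ 0 → 0 < iteratedFDeriv ℝ 2 W pm ![v, v]
  hess_p : ∀ v : ℝ × ℝ, v ≠ 0 → 0 < iteratedFDeriv ℝ 2 W pp ![v, v]
  coercive : ∃ c > 0, ∃ R : ℝ, ∀ p : ℝ × ℝ, R ≤ ‖p‖ → c ≤ W p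

/-- The singular Carnot–Carathéodory distance on `ℝ³` induced by the conformal factor `F`:
the infimum of degenerate lengths of locally Lipschitz planar curves joining the planar
projections of `P` and `Q` whose signed area equals the difference of third coordinates. -/
def dCC (F : ℝ × ℝ → ℝ) (P Q : ℝ × ℝ × ℝ) : ℝ :=
  sInf { x | ∃ a b γ, IsCurve a b γ (P.1, P.2.1) (Q.1, Q.2.1) ∧
      sArea a b γ = Q.2.2 - P.2.2 ∧ degLen F a b γ = x }

/-!
The `1`-form `λ₁ x dy - λ₂ y dx` has exterior derivative `(λ₁ + λ₂) dx ∧ dy` and Euclidean norm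
`√(λ₁² x² + λ₂² y²)`, so a loop enclosing area `α` has length at least `(λ₁ + λ₂) |α|` for the
quadratic well. A loop at the origin which stays in a small ball inherits this bound up to a factor
`1 - ε`, while one which leaves the ball has length bounded below independently of `α`. The
form computes length exactly along level ellipses of `λ₁ x² + λ₂ y²`. A spiral of size `s` around
such an ellipse therefore has length `(λ₁ + λ₂) |α| + O(s²)`, where the error is uniform in the
winding number; winding fast enough encloses any area `α` with `s` as small as desired.
-/

open Asymptotics
open scoped Real

section LineIntegral

theorem absolutelyContinuousOnInterval_of_locallyLipschitz {X : Type*} [PseudoMetricSpace X]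
    {f : ℝ → X} (hf : LocallyLipschitz f) (a b : ℝ) : AbsolutelyContinuousOnInterval f a b := by
  obtain ⟨K, hK⟩ :=
    (hf.locallyLipschitzOn (s := uIcc a b)).exists_lipschitzOnWith_of_compact isCompact_uIcc
  exact hK.absolutelyContinuousOnInterval

variable {E : Type*} [NormedAddCommGroup E] [NormedSpace ℝ E] {γ : ℝ → E}

/-- The integral `∫_γ ω` of a `1`-form `ω` along the restriction of the curve `γ` to `[a, b]`. The
velocity is `deriv γ`, which takes the junk value `0` on the null set where a locally Lipschitz `γ`
is not differentiable. -/
def lineIntegral (ω : E → E →L[ℝ] ℝ) (a b : ℝ) (γ : ℝ → E) : ℝ :=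
  ∫ t in a..b, ω (γ t) (deriv γ t)

variable [FiniteDimensional ℝ E]

theorem ae_differentiableAt_of_locallyLipschitz (hγ : LocallyLipschitz γ) :
    ∀ᵐ t, DifferentiableAt ℝ γ t := by
  refine LocallyBoundedVariationOn.ae_differentiableAt fun a b _ _ ↦ ?_
  exact BoundedVariationOn.mono
    (absolutelyContinuousOnInterval_of_locallyLipschitz hγ a b).boundedVariationOn
    (inter_subset_right.trans Icc_subset_uIcc)

theorem intervalIntegrable_deriv_of_locallyLipschitz (hγ : LocallyLipschitz γ) (a b : ℝ) :
    IntervalIntegrable (deriv γ) volume a b := by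
  obtain ⟨K, hK⟩ := (hγ.locallyLipschitzOn
    (s := Icc (min a b - 1) (max a b + 1))).exists_lipschitzOnWith_of_compact isCompact_Icc
  have deriv_le : ∀ t ∈ uIoc a b, ‖deriv γ t‖ ≤ K := fun t ht ↦
    norm_deriv_le_of_lipschitzOn (Icc_mem_nhds (by linarith [ht.1]) (by linarith [ht.2])) hK
  refine (intervalIntegrable_const (c := (K : ℝ))).mono_fun
    (stronglyMeasurable_deriv γ).aestronglyMeasurable ?_
  filter_upwards [ae_restrict_mem measurableSet_uIoc] with t ht
  simpa using deriv_le t ht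

theorem intervalIntegrable_lineIntegral {ω : E → E →L[ℝ] ℝ} (hω : Continuous ω)
    (hγ : LocallyLipschitz γ) (a b : ℝ) :
    IntervalIntegrable (fun t ↦ ω (γ t) (deriv γ t)) volume a b := by
  have hωγ : Continuous fun t ↦ ω (γ t) := hω.comp hγ.continuous
  have bound_integrable :=
    (intervalIntegrable_deriv_of_locallyLipschitz hγ a b).norm.continuousOn_mul
      hωγ.norm.continuousOn
  refine bound_integrable.mono_fun ?_ (.of_forall fun t ↦ ?_)
  · exact (ContinuousLinearMap.apply ℝ ℝ).flip.aestronglyMeasurable_comp₂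
      hωγ.aestronglyMeasurable (stronglyMeasurable_deriv γ).aestronglyMeasurable
  · simpa using (ω (γ t)).le_opNorm (deriv γ t)

theorem lineIntegral_fderiv {G : E → ℝ} (hG : ContDiff ℝ 1 G) (hγ : LocallyLipschitz γ)
    (a b : ℝ) : lineIntegral (fderiv ℝ G) a b γ = G (γ b) - G (γ a) := by
  have chain_rule : ∀ᵐ t, fderiv ℝ G (γ t) (deriv γ t) = deriv (G ∘ γ) t := by
    filter_upwards [ae_differentiableAt_of_locallyLipschitz hγ] with t ht
    exact (fderiv_comp_deriv t (hG.differentiable one_ne_zero _) ht).symm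
  calc lineIntegral (fderiv ℝ G) a b γ
      = ∫ t in a..b, deriv (G ∘ γ) t :=
        intervalIntegral.integral_congr_ae (chain_rule.mono fun _ h _ ↦ h)
    _ = G (γ b) - G (γ a) := (absolutelyContinuousOnInterval_of_locallyLipschitz
        (hG.locallyLipschitz.comp hγ) a b).integral_deriv_eq_sub

end LineIntegral

section EuclideanNorm

theorem enorm2_eq_norm (v : ℝ × ℝ) : enorm2 v = ‖WithLp.toLp 2 v‖ := by
  simp [enorm2, WithLp.prod_norm_eq_of_L2]

theorem enorm2_nonneg (v : ℝ × ℝ) : 0 ≤ enorm2 v :=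
  Real.sqrt_nonneg _

theorem enorm2_sq (v : ℝ × ℝ) : enorm2 v ^ 2 = v.1 ^ 2 + v.2 ^ 2 :=
  Real.sq_sqrt (by positivity)

@[fun_prop]
theorem continuous_enorm2 : Continuous enorm2 := by
  unfold enorm2
  fun_prop

theorem enorm2_add_le (u v : ℝ × ℝ) : enorm2 (u + v) ≤ enorm2 u + enorm2 v := by
  simpa only [enorm2_eq_norm, WithLp.toLp_add] using
    norm_add_le (WithLp.toLp 2 u) (WithLp.toLp 2 v)

theorem enorm2_smul (c : ℝ) (v : ℝ × ℝ) : enorm2 (c • v) = |c| * enorm2 v := by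
  simpa only [enorm2_eq_norm, WithLp.toLp_smul, Real.norm_eq_abs] using
    norm_smul c (WithLp.toLp 2 v)

theorem norm_le_enorm2 (v : ℝ × ℝ) : ‖v‖ ≤ enorm2 v := by
  refine max_le ?_ ?_ <;> exact Real.abs_le_sqrt (by simp [sq_nonneg])

theorem enorm2_le_two_mul_norm (v : ℝ × ℝ) : enorm2 v ≤ 2 * ‖v‖ := by
  refine Real.sqrt_le_iff.2 ⟨by positivity, ?_⟩
  have hfst : v.1 ^ 2 ≤ ‖v‖ ^ 2 := sq_le_sq.2 (by simpa using norm_fst_le v)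
  have hsnd : v.2 ^ 2 ≤ ‖v‖ ^ 2 := sq_le_sq.2 (by simpa using norm_snd_le v)
  linarith [sq_nonneg ‖v‖]

theorem abs_dot_le_enorm2_mul (u v : ℝ × ℝ) :
    |u.1 * v.1 + u.2 * v.2| ≤ enorm2 u * enorm2 v := by
  rw [enorm2, enorm2, ← Real.sqrt_mul (by positivity)]
  exact Real.abs_le_sqrt (by linarith [sq_nonneg (u.1 * v.2 - u.2 * v.1)])

theorem abs_cross_le_enorm2_mul (u v : ℝ × ℝ) :
    |u.1 * v.2 - u.2 * v.1| ≤ enorm2 u * enorm2 v := by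
  rw [enorm2, enorm2, ← Real.sqrt_mul (by positivity)]
  exact Real.abs_le_sqrt (by linarith [sq_nonneg (u.1 * v.1 + u.2 * v.2)])

end EuclideanNorm

section DegenerateLength

variable {F G : ℝ × ℝ → ℝ} {γ : ℝ → ℝ × ℝ} {a b : ℝ}

theorem intervalIntegrable_degLen (hF : Continuous F) (hγ : LocallyLipschitz γ) (a b : ℝ) :
    IntervalIntegrable (fun t ↦ F (γ t) * enorm2 (deriv γ t)) volume a b := by
  have speed_integrable : IntervalIntegrable (fun t ↦ enorm2 (deriv γ t)) volume a b := by
    refine ((intervalIntegrable_deriv_of_locallyLipschitz hγ a b).norm.const_mul 2).mono_fun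
      (continuous_enorm2.measurable.comp (measurable_deriv γ)).aestronglyMeasurable
      (.of_forall fun t ↦ ?_)
    simpa [abs_of_nonneg (enorm2_nonneg _)] using enorm2_le_two_mul_norm (deriv γ t)
  exact speed_integrable.continuousOn_mul (hF.comp hγ.continuous).continuousOn

theorem degLen_nonneg (hF : ∀ p, 0 ≤ F p) (hab : a ≤ b) : 0 ≤ degLen F a b γ :=
  intervalIntegral.integral_nonneg hab fun _ _ ↦ mul_nonneg (hF _) (enorm2_nonneg _)

theorem degLen_const_mul (k : ℝ) : degLen (fun p ↦ k * F p) a b γ = k * degLen F a b γ := by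
  simp only [degLen, mul_assoc, intervalIntegral.integral_const_mul]

theorem degLen_mono (hF : Continuous F) (hG : Continuous G) (hγ : LocallyLipschitz γ)
    (hab : a ≤ b) (hFG : ∀ t ∈ Icc a b, F (γ t) ≤ G (γ t)) :
    degLen F a b γ ≤ degLen G a b γ :=
  intervalIntegral.integral_mono_on hab (intervalIntegrable_degLen hF hγ a b)
    (intervalIntegrable_degLen hG hγ a b) fun t ht ↦
      mul_le_mul_of_nonneg_right (hFG t ht) (enorm2_nonneg _)

theorem degLen_le_degLen_right (hF : Continuous F) (hF_nonneg : ∀ p, 0 ≤ F p)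
    (hγ : LocallyLipschitz γ) {c : ℝ} (hab : a ≤ b) (hbc : b ≤ c) :
    degLen F a b γ ≤ degLen F a c γ :=
  intervalIntegral.integral_mono_interval le_rfl hab hbc
    (.of_forall fun _ ↦ mul_nonneg (hF_nonneg _) (enorm2_nonneg _))
    (intervalIntegrable_degLen hF hγ a c)

theorem abs_lineIntegral_le_degLen {ω : ℝ × ℝ → ℝ × ℝ →L[ℝ] ℝ} (hF : Continuous F)
    (hγ : LocallyLipschitz γ) (hab : a ≤ b) (hω : ∀ p v, |ω p v| ≤ F p * enorm2 v) :
    |lineIntegral ω a b γ| ≤ degLen F a b γ := by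
  rw [← Real.norm_eq_abs]
  exact intervalIntegral.norm_integral_le_of_norm_le hab (.of_forall fun t _ ↦ hω (γ t) _)
    (intervalIntegrable_degLen hF hγ a b)

theorem sArea_eq_lineIntegral (hγ : LocallyLipschitz γ) (a b : ℝ) :
    sArea a b γ = lineIntegral (fun p ↦ p.1 • ContinuousLinearMap.snd ℝ ℝ ℝ) a b γ := by
  refine intervalIntegral.integral_congr_ae ?_
  filter_upwards [ae_differentiableAt_of_locallyLipschitz hγ] with t ht _
  have deriv_snd : deriv (fun s ↦ (γ s).2) t = (deriv γ t).2 :=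
    ((ContinuousLinearMap.snd ℝ ℝ ℝ).hasFDerivAt.comp_hasDerivAt t ht.hasDerivAt).deriv
  simp [deriv_snd]

end DegenerateLength

section Model

variable {l1 l2 : ℝ} {γ : ℝ → ℝ × ℝ} {a b : ℝ}

/-- The conformal factor `√(λ₁² x² + λ₂² y²)` of the purely quadratic well. -/
def wellModel (l1 l2 : ℝ) (p : ℝ × ℝ) : ℝ := enorm2 (l1 * p.1, l2 * p.2)

/-- The `1`-form `λ₁ x dy - λ₂ y dx`. It calibrates the quadratic well: its exterior derivative is
`λ₁ + λ₂` times the area form, and its Euclidean norm is `wellModel l1 l2`. -/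
def areaCalibration (l1 l2 : ℝ) (p : ℝ × ℝ) : ℝ × ℝ →L[ℝ] ℝ :=
  (l1 * p.1) • ContinuousLinearMap.snd ℝ ℝ ℝ - (l2 * p.2) • ContinuousLinearMap.fst ℝ ℝ ℝ

theorem areaCalibration_apply (p v : ℝ × ℝ) :
    areaCalibration l1 l2 p v = l1 * p.1 * v.2 - l2 * p.2 * v.1 :=
  rfl

theorem continuous_areaCalibration : Continuous (areaCalibration l1 l2) := by
  unfold areaCalibration
  fun_prop

@[fun_prop]
theorem continuous_wellModel : Continuous (wellModel l1 l2) := by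
  unfold wellModel
  fun_prop

theorem wellModel_nonneg (p : ℝ × ℝ) : 0 ≤ wellModel l1 l2 p :=
  enorm2_nonneg _

theorem wellModel_sq (p : ℝ × ℝ) :
    wellModel l1 l2 p ^ 2 = l1 ^ 2 * p.1 ^ 2 + l2 ^ 2 * p.2 ^ 2 := by
  rw [wellModel, enorm2_sq, mul_pow, mul_pow]

theorem wellModel_smul (c : ℝ) (p : ℝ × ℝ) :
    wellModel l1 l2 (c • p) = |c| * wellModel l1 l2 p := by
  rw [wellModel, wellModel, ← enorm2_smul]
  simp [mul_left_comm]

theorem min_mul_enorm2_le_wellModel (hl1 : 0 ≤ l1) (hl2 : 0 ≤ l2) (p : ℝ × ℝ) :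
    min l1 l2 * enorm2 p ≤ wellModel l1 l2 p := by
  refine Real.le_sqrt_of_sq_le ?_
  have : 0 ≤ min l1 l2 := le_min hl1 hl2
  rw [mul_pow, enorm2_sq, mul_add, mul_pow, mul_pow]
  gcongr
  exacts [min_le_left _ _, min_le_right _ _]

theorem wellModel_le_add_mul_enorm2 (hl1 : 0 ≤ l1) (hl2 : 0 ≤ l2) (p : ℝ × ℝ) :
    wellModel l1 l2 p ≤ (l1 + l2) * enorm2 p := by
  refine Real.sqrt_le_iff.2 ⟨mul_nonneg (by positivity) (enorm2_nonneg p), ?_⟩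
  rw [mul_pow (l1 + l2), enorm2_sq, mul_add, mul_pow, mul_pow]
  gcongr <;> linarith

theorem abs_areaCalibration_le (p v : ℝ × ℝ) :
    |areaCalibration l1 l2 p v| ≤ wellModel l1 l2 p * enorm2 v :=
  abs_cross_le_enorm2_mul (l1 * p.1, l2 * p.2) v

-- The form differs from `(λ₁ + λ₂) x dy` by the exact form `-λ₂ d(xy)`.
theorem lineIntegral_areaCalibration (hγ : LocallyLipschitz γ) (hloop : γ a = γ b) :
    lineIntegral (areaCalibration l1 l2) a b γ = (l1 + l2) * sArea a b γ := by
  have hxy : ContDiff ℝ 1 fun p : ℝ × ℝ ↦ p.1 * p.2 := by fun_prop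
  have exact_part := lineIntegral_fderiv hxy hγ a b
  rw [hloop, sub_self] at exact_part
  have split : ∀ p v : ℝ × ℝ, areaCalibration l1 l2 p v =
      (l1 + l2) * (p.1 • ContinuousLinearMap.snd ℝ ℝ ℝ) v
        - l2 * fderiv ℝ (fun p : ℝ × ℝ ↦ p.1 * p.2) p v := by
    intro p v
    rw [fderiv_fun_mul differentiableAt_fst differentiableAt_snd, fderiv_fst, fderiv_snd,
      areaCalibration_apply]
    simp only [add_apply, smul_apply, smul_eq_mul,
      ContinuousLinearMap.coe_fst', ContinuousLinearMap.coe_snd']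
    ring
  rw [sArea_eq_lineIntegral hγ, ← sub_zero (_ * _), ← mul_zero l2, ← exact_part]
  simp only [lineIntegral, split]
  rw [intervalIntegral.integral_sub, intervalIntegral.integral_const_mul,
    intervalIntegral.integral_const_mul]
  · refine IntervalIntegrable.const_mul ?_ _
    exact intervalIntegrable_lineIntegral (continuous_fst.smul continuous_const) hγ a b
  · refine IntervalIntegrable.const_mul ?_ _
    exact intervalIntegrable_lineIntegral (hxy.continuous_fderiv one_ne_zero) hγ a b

theorem add_mul_abs_sArea_le_degLen_wellModel (hγ : LocallyLipschitz γ) (hab : a ≤ b)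
    (hloop : γ a = γ b) : (l1 + l2) * |sArea a b γ| ≤ degLen (wellModel l1 l2) a b γ :=
  calc (l1 + l2) * |sArea a b γ|
      ≤ |(l1 + l2) * sArea a b γ| := by rw [abs_mul]; gcongr; exact le_abs_self _
    _ = |lineIntegral (areaCalibration l1 l2) a b γ| := by
        rw [lineIntegral_areaCalibration hγ hloop]
    _ ≤ degLen (wellModel l1 l2) a b γ :=
        abs_lineIntegral_le_degLen continuous_wellModel hγ hab abs_areaCalibration_le

theorem enorm2_sq_sub_enorm2_sq_le_degLen (hγ : LocallyLipschitz γ) (hab : a ≤ b) :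
    (enorm2 (γ b) ^ 2 - enorm2 (γ a) ^ 2) / 2 ≤ degLen enorm2 a b γ := by
  have hG : ContDiff ℝ 1 fun p : ℝ × ℝ ↦ (p.1 ^ 2 + p.2 ^ 2) / 2 := by fun_prop
  have fderiv_le : ∀ p v : ℝ × ℝ,
      |fderiv ℝ (fun p : ℝ × ℝ ↦ (p.1 ^ 2 + p.2 ^ 2) / 2) p v| ≤ enorm2 p * enorm2 v := by
    intro p v
    have hfderiv : HasFDerivAt (fun p : ℝ × ℝ ↦ (p.1 ^ 2 + p.2 ^ 2) / 2)
        (p.1 • ContinuousLinearMap.fst ℝ ℝ ℝ + p.2 • ContinuousLinearMap.snd ℝ ℝ ℝ) p := by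
      have hfst : HasFDerivAt (fun p : ℝ × ℝ ↦ p.1) (.fst ℝ ℝ ℝ) p := hasFDerivAt_fst
      have hsnd : HasFDerivAt (fun p : ℝ × ℝ ↦ p.2) (.snd ℝ ℝ ℝ) p := hasFDerivAt_snd
      convert! ((hfst.pow 2).add (hsnd.pow 2)).mul_const (2⁻¹ : ℝ) using 1
      ext <;> simp
    rw [hfderiv.fderiv]
    exact abs_dot_le_enorm2_mul p v
  calc (enorm2 (γ b) ^ 2 - enorm2 (γ a) ^ 2) / 2
      = lineIntegral (fderiv ℝ fun p : ℝ × ℝ ↦ (p.1 ^ 2 + p.2 ^ 2) / 2) a b γ := by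
        rw [lineIntegral_fderiv hG hγ, enorm2_sq, enorm2_sq, sub_div]
    _ ≤ degLen enorm2 a b γ :=
        (le_abs_self _).trans (abs_lineIntegral_le_degLen continuous_enorm2 hγ hab fderiv_le)

end Model


section LowerBound

theorem exists_first_hit {f : ℝ → ℝ} (hf : Continuous f) {a t r : ℝ} (hat : a ≤ t)
    (hfa : f a ≤ r) (hft : r ≤ f t) :
    ∃ τ ∈ Icc a t, f τ = r ∧ ∀ s ∈ Icc a τ, f s ≤ r := by
  have hits_nonempty : (Icc a t ∩ f ⁻¹' {r}).Nonempty :=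
    intermediate_value_Icc hat hf.continuousOn ⟨hfa, hft⟩
  have hits_compact : IsCompact (Icc a t ∩ f ⁻¹' {r}) :=
    isCompact_Icc.inter_right (isClosed_singleton.preimage hf)
  obtain ⟨τ, ⟨hτ, hfτ⟩, hτ_least⟩ := hits_compact.exists_isLeast hits_nonempty
  refine ⟨τ, hτ, hfτ, fun s hs ↦ ?_⟩
  by_contra! hrs
  obtain ⟨u, hu, hfu⟩ := intermediate_value_Icc hs.1 hf.continuousOn ⟨hfa, hrs.le⟩
  have hτu : τ ≤ u := hτ_least ⟨⟨hu.1, hu.2.trans (hs.2.trans hτ.2)⟩, hfu⟩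
  have hsτ : s = τ := hs.2.antisymm (hτu.trans hu.2)
  exact hrs.ne' (hsτ ▸ hfτ)

variable {F : ℝ × ℝ → ℝ} {γ : ℝ → ℝ × ℝ} {l1 l2 k r a b : ℝ}

theorem le_degLen_of_escape (hF : Continuous F) (hF_nonneg : ∀ p, 0 ≤ F p)
    (hl1 : 0 ≤ l1) (hl2 : 0 ≤ l2) (hk : 0 ≤ k) (hr : 0 ≤ r)
    (hkF : ∀ p, enorm2 p ≤ r → k * wellModel l1 l2 p ≤ F p) (hγ : LocallyLipschitz γ)
    (hγa : γ a = 0) {t : ℝ} (ht : t ∈ Icc a b) (hγt : r ≤ enorm2 (γ t)) :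
    k * (min l1 l2 * (r ^ 2 / 2)) ≤ degLen F a b γ := by
  have enorm2_start : enorm2 (γ a) = 0 := by simp [hγa, enorm2]
  obtain ⟨τ, hτ, hγτ, hball⟩ := exists_first_hit (continuous_enorm2.comp hγ.continuous) ht.1
    (enorm2_start.trans_le hr) hγt
  have radial := enorm2_sq_sub_enorm2_sq_le_degLen hγ hτ.1
  rw [enorm2_start, show enorm2 (γ τ) = r from hγτ, zero_pow two_ne_zero, sub_zero] at radial
  have : 0 ≤ min l1 l2 := le_min hl1 hl2
  calc k * (min l1 l2 * (r ^ 2 / 2))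
      ≤ k * (min l1 l2 * degLen enorm2 a τ γ) := by gcongr
    _ = k * degLen (fun p ↦ min l1 l2 * enorm2 p) a τ γ := by rw [degLen_const_mul]
    _ ≤ k * degLen (wellModel l1 l2) a τ γ := by
        gcongr
        exact degLen_mono (by fun_prop) continuous_wellModel hγ hτ.1
          fun s _ ↦ min_mul_enorm2_le_wellModel hl1 hl2 _
    _ = degLen (fun p ↦ k * wellModel l1 l2 p) a τ γ := by rw [degLen_const_mul]
    _ ≤ degLen F a τ γ := degLen_mono (by fun_prop) hF hγ hτ.1 fun s hs ↦ hkF _ (hball s hs)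
    _ ≤ degLen F a b γ := degLen_le_degLen_right hF hF_nonneg hγ hτ.1 (hτ.2.trans ht.2)

theorem mul_min_le_degLen_of_loop (hF : Continuous F) (hF_nonneg : ∀ p, 0 ≤ F p)
    (hl1 : 0 ≤ l1) (hl2 : 0 ≤ l2) (hk : 0 ≤ k) (hr : 0 ≤ r)
    (hkF : ∀ p, enorm2 p ≤ r → k * wellModel l1 l2 p ≤ F p) (hγ : IsCurve a b γ 0 0) :
    k * min ((l1 + l2) * |sArea a b γ|) (min l1 l2 * (r ^ 2 / 2)) ≤ degLen F a b γ := by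
  rw [mul_min_of_nonneg _ _ hk]
  obtain ⟨hab, hγ_lip, hγa, hγb⟩ := hγ
  by_cases hball : ∀ t ∈ Icc a b, enorm2 (γ t) ≤ r
  · refine min_le_of_left_le ?_
    calc k * ((l1 + l2) * |sArea a b γ|)
        ≤ k * degLen (wellModel l1 l2) a b γ := by
          gcongr
          exact add_mul_abs_sArea_le_degLen_wellModel hγ_lip hab (hγa.trans hγb.symm)
      _ = degLen (fun p ↦ k * wellModel l1 l2 p) a b γ := by rw [degLen_const_mul]
      _ ≤ degLen F a b γ :=
          degLen_mono (by fun_prop) hF hγ_lip hab fun t ht ↦ hkF _ (hball t ht)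
  · push Not at hball
    obtain ⟨t, ht, hγt⟩ := hball
    exact min_le_of_right_le
      (le_degLen_of_escape hF hF_nonneg hl1 hl2 hk hr hkF hγ_lip hγa ht hγt.le)

end LowerBound

section UpperBound

variable {l1 l2 : ℝ}

/-- The parametrisation of a level ellipse of `λ₁ x² + λ₂ y²`, the shape of the loops whose length
is computed exactly by `areaCalibration l1 l2`. -/
def ellipse (l1 l2 θ : ℝ) : ℝ × ℝ := (√l2 * Real.cos θ, √l1 * Real.sin θ)

theorem hasDerivAt_ellipse (θ : ℝ) :
    HasDerivAt (ellipse l1 l2) (ellipse l1 l2 (θ + π / 2)) θ := by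
  convert! ((Real.hasDerivAt_cos θ).const_mul √l2).prodMk ((Real.hasDerivAt_sin θ).const_mul √l1)
    using 1
  simp [ellipse, Real.cos_add_pi_div_two, Real.sin_add_pi_div_two]

theorem enorm2_ellipse_le (hl1 : 0 ≤ l1) (hl2 : 0 ≤ l2) (θ : ℝ) :
    enorm2 (ellipse l1 l2 θ) ≤ √(l1 + l2) := by
  refine Real.sqrt_le_sqrt ?_
  simp only [ellipse, mul_pow, Real.sq_sqrt hl1, Real.sq_sqrt hl2]
  nlinarith [Real.cos_sq_le_one θ, Real.sin_sq_le_one θ]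

theorem wellModel_ellipse (hl1 : 0 ≤ l1) (hl2 : 0 ≤ l2) (θ : ℝ) :
    wellModel l1 l2 (ellipse l1 l2 θ) = √l1 * √l2 * enorm2 (ellipse l1 l2 (θ + π / 2)) := by
  rw [← abs_of_nonneg (by positivity : 0 ≤ √l1 * √l2), ← enorm2_smul]
  simp only [wellModel, enorm2, ellipse, Real.cos_add_pi_div_two, Real.sin_add_pi_div_two,
    Prod.smul_mk, smul_eq_mul]
  congr 1
  linear_combination (√l2 ^ 2 * Real.cos θ ^ 2) * (-(l1 + √l1 ^ 2)) * Real.sq_sqrt hl1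
    + (√l1 ^ 2 * Real.sin θ ^ 2) * (-(l2 + √l2 ^ 2)) * Real.sq_sqrt hl2

theorem areaCalibration_ellipse (hl1 : 0 ≤ l1) (hl2 : 0 ≤ l2) (θ : ℝ) :
    areaCalibration l1 l2 (ellipse l1 l2 θ) (ellipse l1 l2 (θ + π / 2)) =
      √l1 * √l2 * enorm2 (ellipse l1 l2 (θ + π / 2)) ^ 2 := by
  rw [areaCalibration_apply, enorm2_sq]
  simp only [ellipse, Real.cos_add_pi_div_two, Real.sin_add_pi_div_two]
  linear_combination (-√l1 * √l2 * Real.cos θ ^ 2) * Real.sq_sqrt hl1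
    + (-√l1 * √l2 * Real.sin θ ^ 2) * Real.sq_sqrt hl2

theorem areaCalibration_one_one_ellipse (θ : ℝ) :
    areaCalibration 1 1 (ellipse l1 l2 θ) (ellipse l1 l2 (θ + π / 2)) = √l1 * √l2 := by
  simp only [areaCalibration_apply, ellipse, Real.cos_add_pi_div_two, Real.sin_add_pi_div_two]
  linear_combination (√l1 * √l2) * Real.sin_sq_add_cos_sq θ

theorem areaCalibration_smul_self_add (e t : ℝ × ℝ) (ρ ρ' M : ℝ) :
    areaCalibration l1 l2 (ρ • e) (ρ' • e + (ρ * M) • t) =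
      ρ * ρ' * areaCalibration l1 l2 e e + ρ ^ 2 * M * areaCalibration l1 l2 e t := by
  simp only [areaCalibration_apply, Prod.fst_add, Prod.snd_add, Prod.smul_fst, Prod.smul_snd,
    smul_eq_mul]
  ring

theorem abs_sign_mul_le (c x : ℝ) : |SignType.sign c * x| ≤ |x| := by
  rcases lt_trichotomy c 0 with h | h | h <;> simp [h]

-- The tangential part `(ρ * M) • t` is calibrated exactly, and the radial part is an error.
theorem wellModel_mul_enorm2_le_of_calibrated {e t : ℝ × ℝ}
    (het : wellModel l1 l2 e * enorm2 t = areaCalibration l1 l2 e t) (ρ ρ' M : ℝ) :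
    wellModel l1 l2 (ρ • e) * enorm2 (ρ' • e + (ρ * M) • t) ≤
      SignType.sign M * areaCalibration l1 l2 (ρ • e) (ρ' • e + (ρ * M) • t)
        + 2 * |ρ * ρ'| * (wellModel l1 l2 e * enorm2 e) := by
  have radial_calibration : -(|ρ * ρ'| * (wellModel l1 l2 e * enorm2 e)) ≤
      SignType.sign M * (ρ * ρ' * areaCalibration l1 l2 e e) := by
    refine neg_le_of_abs_le ?_
    refine (abs_sign_mul_le _ _).trans ?_
    rw [abs_mul]
    exact mul_le_mul_of_nonneg_left (abs_areaCalibration_le e e) (abs_nonneg _)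
  calc wellModel l1 l2 (ρ • e) * enorm2 (ρ' • e + (ρ * M) • t)
      ≤ |ρ| * wellModel l1 l2 e * (|ρ'| * enorm2 e + |ρ * M| * enorm2 t) := by
        rw [wellModel_smul, ← enorm2_smul, ← enorm2_smul]
        exact mul_le_mul_of_nonneg_left (enorm2_add_le _ _)
          (mul_nonneg (abs_nonneg ρ) (wellModel_nonneg _))
    _ = |ρ * ρ'| * (wellModel l1 l2 e * enorm2 e)
          + SignType.sign M * (ρ ^ 2 * M * areaCalibration l1 l2 e t) := by
        rw [abs_mul, abs_mul, ← het, ← sq_abs ρ]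
        linear_combination (-|ρ| ^ 2 * wellModel l1 l2 e * enorm2 t) * sign_mul_self M
    _ ≤ _ := by
        rw [areaCalibration_smul_self_add]
        linarith

/-- The elliptical spiral that leaves the origin, reaches size `s` and comes back as `u` runs over
`[0, π]`, while winding with angular speed `M`. -/
def spiral (l1 l2 s M u : ℝ) : ℝ × ℝ := (s * Real.sin u) • ellipse l1 l2 (M * u)

variable {s M : ℝ}

theorem hasDerivAt_spiral (u : ℝ) :
    HasDerivAt (spiral l1 l2 s M) ((s * Real.cos u) • ellipse l1 l2 (M * u)
      + (s * Real.sin u * M) • ellipse l1 l2 (M * u + π / 2)) u := by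
  have hangle : HasDerivAt (fun u ↦ M * u) M u := by simpa using (hasDerivAt_id u).const_mul M
  have hellipse := (hasDerivAt_ellipse (l1 := l1) (l2 := l2) (M * u)).scomp u hangle
  convert! ((Real.hasDerivAt_sin u).const_mul s).smul hellipse using 1
  rw [add_comm, smul_smul, Function.comp_apply]

theorem isCurve_spiral : IsCurve 0 π (spiral l1 l2 s M) 0 0 := by
  refine ⟨Real.pi_nonneg, ContDiff.locallyLipschitz (𝕂 := ℝ) ?_, by simp [spiral],
    by simp [spiral]⟩
  unfold spiral ellipse
  fun_prop

theorem sArea_spiral : sArea 0 π (spiral l1 l2 s M) = s ^ 2 * √l1 * √l2 * M * π / 4 := by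
  obtain ⟨-, hlip, h0, hπ⟩ := isCurve_spiral (l1 := l1) (l2 := l2) (s := s) (M := M)
  have twice_area : lineIntegral (areaCalibration 1 1) 0 π (spiral l1 l2 s M) =
      (1 + 1) * sArea 0 π (spiral l1 l2 s M) :=
    lineIntegral_areaCalibration hlip (h0.trans hπ.symm)
  have integrand : ∀ u, areaCalibration 1 1 (spiral l1 l2 s M u) (deriv (spiral l1 l2 s M) u) =
      s ^ 2 * √l1 * √l2 * M * Real.sin u ^ 2 := fun u ↦ by
    rw [(hasDerivAt_spiral u).deriv, spiral, areaCalibration_smul_self_add,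
      areaCalibration_one_one_ellipse, areaCalibration_apply]
    ring
  simp only [lineIntegral, integrand, intervalIntegral.integral_const_mul, integral_sin_sq,
    Real.sin_zero, Real.sin_pi] at twice_area
  linarith

theorem exists_sArea_spiral_eq (hl1 : 0 < l1) (hl2 : 0 < l2) (hs : s ≠ 0) (α : ℝ) :
    ∃ M, sArea 0 π (spiral l1 l2 s M) = α := by
  refine ⟨4 * α / (s ^ 2 * √l1 * √l2 * π), ?_⟩
  rw [sArea_spiral]
  field_simp

theorem enorm2_spiral_le (hl1 : 0 ≤ l1) (hl2 : 0 ≤ l2) (u : ℝ) :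
    enorm2 (spiral l1 l2 s M u) ≤ |s| * √(l1 + l2) := by
  rw [spiral, enorm2_smul, abs_mul]
  gcongr
  · exact enorm2_nonneg _
  · exact mul_le_of_le_one_right (abs_nonneg s) (Real.abs_sin_le_one u)
  · exact enorm2_ellipse_le hl1 hl2 _

theorem wellModel_spiral_mul_enorm2_deriv_le (hl1 : 0 ≤ l1) (hl2 : 0 ≤ l2) (u : ℝ) :
    wellModel l1 l2 (spiral l1 l2 s M u) * enorm2 (deriv (spiral l1 l2 s M) u) ≤
      SignType.sign M * areaCalibration l1 l2 (spiral l1 l2 s M u) (deriv (spiral l1 l2 s M) u)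
        + 2 * s ^ 2 * (l1 + l2) ^ 2 := by
  have calibrated : wellModel l1 l2 (ellipse l1 l2 (M * u)) *
      enorm2 (ellipse l1 l2 (M * u + π / 2)) =
        areaCalibration l1 l2 (ellipse l1 l2 (M * u)) (ellipse l1 l2 (M * u + π / 2)) := by
    rw [wellModel_ellipse hl1 hl2, areaCalibration_ellipse hl1 hl2]
    ring
  have ellipse_size : wellModel l1 l2 (ellipse l1 l2 (M * u)) * enorm2 (ellipse l1 l2 (M * u)) ≤
      (l1 + l2) ^ 2 :=
    calc _ ≤ (l1 + l2) * enorm2 (ellipse l1 l2 (M * u)) ^ 2 := by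
          rw [sq, ← mul_assoc]
          exact mul_le_mul_of_nonneg_right (wellModel_le_add_mul_enorm2 hl1 hl2 _)
            (enorm2_nonneg _)
      _ ≤ (l1 + l2) * √(l1 + l2) ^ 2 := by
          gcongr
          · exact enorm2_nonneg _
          · exact enorm2_ellipse_le hl1 hl2 _
      _ = (l1 + l2) ^ 2 := by rw [Real.sq_sqrt (by positivity), sq]
  have radial_size : |s * Real.sin u * (s * Real.cos u)| ≤ s ^ 2 := by
    rw [mul_mul_mul_comm, ← sq, abs_mul, abs_sq, abs_mul]
    exact mul_le_of_le_one_right (sq_nonneg s)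
      (mul_le_one₀ (Real.abs_sin_le_one u) (abs_nonneg _) (Real.abs_cos_le_one u))
  rw [(hasDerivAt_spiral u).deriv, spiral]
  refine (wellModel_mul_enorm2_le_of_calibrated calibrated _ _ M).trans ?_
  gcongr
  exact mul_nonneg (wellModel_nonneg _) (enorm2_nonneg _)

theorem degLen_wellModel_spiral_le (hl1 : 0 ≤ l1) (hl2 : 0 ≤ l2) :
    degLen (wellModel l1 l2) 0 π (spiral l1 l2 s M) ≤
      (l1 + l2) * |sArea 0 π (spiral l1 l2 s M)| + 2 * s ^ 2 * (l1 + l2) ^ 2 * π := by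
  obtain ⟨-, hlip, h0, hπ⟩ := isCurve_spiral (l1 := l1) (l2 := l2) (s := s) (M := M)
  have calibration_integrable := (intervalIntegrable_lineIntegral
    (continuous_areaCalibration (l1 := l1) (l2 := l2)) hlip 0 π).const_mul (SignType.sign M : ℝ)
  calc degLen (wellModel l1 l2) 0 π (spiral l1 l2 s M)
      ≤ ∫ u in 0..π, (SignType.sign M * areaCalibration l1 l2 (spiral l1 l2 s M u)
          (deriv (spiral l1 l2 s M) u) + 2 * s ^ 2 * (l1 + l2) ^ 2) :=
        intervalIntegral.integral_mono_on Real.pi_nonneg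
          (intervalIntegrable_degLen continuous_wellModel hlip 0 π)
          (calibration_integrable.add intervalIntegrable_const)
          fun u _ ↦ wellModel_spiral_mul_enorm2_deriv_le hl1 hl2 u
    _ = (l1 + l2) * (SignType.sign M * sArea 0 π (spiral l1 l2 s M))
          + 2 * s ^ 2 * (l1 + l2) ^ 2 * π := by
        rw [intervalIntegral.integral_add calibration_integrable intervalIntegrable_const,
          intervalIntegral.integral_const_mul, intervalIntegral.integral_const,
          mul_left_comm (l1 + l2), ← lineIntegral_areaCalibration hlip (h0.trans hπ.symm),
          lineIntegral]
        simp [mul_comm]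
    _ ≤ (l1 + l2) * |sArea 0 π (spiral l1 l2 s M)| + 2 * s ^ 2 * (l1 + l2) ^ 2 * π := by
        gcongr
        exact (le_abs_self _).trans (abs_sign_mul_le _ _)

end UpperBound

section VerticalDistance

variable {F : ℝ × ℝ → ℝ} {l1 l2 k r : ℝ}

theorem dCC_le_degLen {P Q : ℝ × ℝ × ℝ} {γ : ℝ → ℝ × ℝ} {a b : ℝ} (hF_nonneg : ∀ p, 0 ≤ F p)
    (hγ : IsCurve a b γ (P.1, P.2.1) (Q.1, Q.2.1)) (harea : sArea a b γ = Q.2.2 - P.2.2) :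
    dCC F P Q ≤ degLen F a b γ := by
  refine csInf_le ⟨0, ?_⟩ ⟨a, b, γ, hγ, harea, rfl⟩
  rintro - ⟨c, d, η, hη, -, rfl⟩
  exact degLen_nonneg hF_nonneg hη.1

theorem dCC_vertical_le_of_spiral (hF : Continuous F) (hF_nonneg : ∀ p, 0 ≤ F p) (hl1 : 0 < l1)
    (hl2 : 0 < l2) (hk : 0 ≤ k) (hFk : ∀ p, enorm2 p ≤ r → F p ≤ k * wellModel l1 l2 p) {s : ℝ}
    (hs : s ≠ 0) (hsr : |s| * √(l1 + l2) ≤ r) (α : ℝ) :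
    dCC F (0, 0, 0) (0, 0, α) ≤ k * ((l1 + l2) * |α| + 2 * s ^ 2 * (l1 + l2) ^ 2 * π) := by
  obtain ⟨M, hM⟩ := exists_sArea_spiral_eq hl1 hl2 hs α
  have hlip : LocallyLipschitz (spiral l1 l2 s M) := isCurve_spiral.2.1
  calc dCC F (0, 0, 0) (0, 0, α)
      ≤ degLen F 0 π (spiral l1 l2 s M) :=
        dCC_le_degLen hF_nonneg isCurve_spiral (hM.trans (sub_zero α).symm)
    _ ≤ degLen (fun p ↦ k * wellModel l1 l2 p) 0 π (spiral l1 l2 s M) :=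
        degLen_mono hF (by fun_prop) hlip Real.pi_nonneg fun u _ ↦
          hFk _ ((enorm2_spiral_le hl1.le hl2.le u).trans hsr)
    _ = k * degLen (wellModel l1 l2) 0 π (spiral l1 l2 s M) := degLen_const_mul k
    _ ≤ k * ((l1 + l2) * |α| + 2 * s ^ 2 * (l1 + l2) ^ 2 * π) := by
        rw [← hM]
        gcongr
        exact degLen_wellModel_spiral_le hl1.le hl2.le

theorem dCC_vertical_le (hF : Continuous F) (hF_nonneg : ∀ p, 0 ≤ F p) (hl1 : 0 < l1)
    (hl2 : 0 < l2) (hk : 0 ≤ k) (hr : 0 < r)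
    (hFk : ∀ p, enorm2 p ≤ r → F p ≤ k * wellModel l1 l2 p) (α : ℝ) :
    dCC F (0, 0, 0) (0, 0, α) ≤ k * ((l1 + l2) * |α|) := by
  have size_tendsto : Tendsto (fun s : ℝ ↦ |s| * √(l1 + l2)) (𝓝[≠] 0) (𝓝 0) :=
    tendsto_nhdsWithin_of_tendsto_nhds (Continuous.tendsto' (by fun_prop) _ _ (by simp))
  have bound_tendsto : Tendsto
      (fun s ↦ k * ((l1 + l2) * |α| + 2 * s ^ 2 * (l1 + l2) ^ 2 * π)) (𝓝[≠] 0)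
      (𝓝 (k * ((l1 + l2) * |α|))) :=
    tendsto_nhdsWithin_of_tendsto_nhds (Continuous.tendsto' (by fun_prop) _ _ (by simp))
  refine ge_of_tendsto bound_tendsto ?_
  filter_upwards [self_mem_nhdsWithin, size_tendsto.eventually_le_const hr] with s hs hsr
  exact dCC_vertical_le_of_spiral hF hF_nonneg hl1 hl2 hk hFk hs hsr α

theorem mul_min_le_dCC_vertical (hF : Continuous F) (hF_nonneg : ∀ p, 0 ≤ F p) (hl1 : 0 < l1)
    (hl2 : 0 < l2) (hk : 0 ≤ k) (hr : 0 ≤ r)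
    (hkF : ∀ p, enorm2 p ≤ r → k * wellModel l1 l2 p ≤ F p) (α : ℝ) :
    k * min ((l1 + l2) * |α|) (min l1 l2 * (r ^ 2 / 2)) ≤ dCC F (0, 0, 0) (0, 0, α) := by
  obtain ⟨M, hM⟩ := exists_sArea_spiral_eq hl1 hl2 one_ne_zero α
  refine le_csInf ⟨_, 0, π, _, isCurve_spiral, hM.trans (sub_zero α).symm, rfl⟩ ?_
  rintro - ⟨a, b, γ, hγ, harea, rfl⟩
  rw [← (harea.trans (sub_zero α) : sArea a b γ = α)]
  exact mul_min_le_degLen_of_loop hF hF_nonneg hl1.le hl2.le hk hr hkF hγ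

theorem exists_forall_abs_sub_wellModel_le (hequiv : F ~[𝓝 0] wellModel l1 l2) {ε : ℝ}
    (hε : 0 < ε) :
    ∃ r > 0, ∀ p, enorm2 p ≤ r → |F p - wellModel l1 l2 p| ≤ ε * wellModel l1 l2 p := by
  obtain ⟨r, hr, hball⟩ := Metric.nhds_basis_closedBall.eventually_iff.1
    (isLittleO_iff.1 hequiv.isLittleO hε)
  refine ⟨r, hr, fun p hp ↦ ?_⟩
  have hpr : p ∈ Metric.closedBall 0 r := mem_closedBall_zero_iff.2 ((norm_le_enorm2 p).trans hp)
  simpa [abs_of_nonneg (wellModel_nonneg _)] using hball hpr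

theorem dCC_vertical_isEquivalent (hF : Continuous F) (hF_nonneg : ∀ p, 0 ≤ F p) (hl1 : 0 < l1)
    (hl2 : 0 < l2) (hequiv : F ~[𝓝 0] wellModel l1 l2) :
    (fun α ↦ dCC F (0, 0, 0) (0, 0, α)) ~[𝓝 0] fun α ↦ (l1 + l2) * |α| := by
  refine isLittleO_iff.2 fun ε hε ↦ ?_
  obtain ⟨r, hr, hball⟩ := exists_forall_abs_sub_wellModel_le hequiv (lt_min hε one_pos)
  have lower := mul_min_le_dCC_vertical hF hF_nonneg hl1 hl2 (k := 1 - min ε 1)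
    (sub_nonneg.2 (min_le_right _ _)) hr.le
    fun p hp ↦ by linarith [neg_le_of_abs_le (hball p hp)]
  have upper := dCC_vertical_le hF hF_nonneg hl1 hl2 (k := 1 + min ε 1) (by positivity) hr
    fun p hp ↦ by linarith [le_of_abs_le (hball p hp)]
  have area_small : ∀ᶠ α in 𝓝 (0 : ℝ), (l1 + l2) * |α| ≤ min l1 l2 * (r ^ 2 / 2) :=
    (Continuous.tendsto' (by fun_prop) 0 0 (by simp)).eventually_le_const
      (by have := lt_min hl1 hl2; positivity)
  filter_upwards [area_small] with α hα
  have lower_α := lower α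
  rw [min_eq_left hα] at lower_α
  have error_le : min ε 1 * ((l1 + l2) * |α|) ≤ ε * ((l1 + l2) * |α|) := by
    gcongr
    exact min_le_left _ _
  rw [Pi.sub_apply, Real.norm_eq_abs, Real.norm_of_nonneg (by positivity), abs_le]
  constructor <;> linarith [upper α]

theorem vertical_rate_general (hF : Continuous F) (hF_nonneg : ∀ p, 0 ≤ F p) (hl1 : 0 < l1)
    (hl2 : 0 < l2) (hequiv : F ~[𝓝 0] wellModel l1 l2) :
    Tendsto (fun α ↦ dCC F (0, 0, 0) (0, 0, α) / |α|) (𝓝[≠] 0) (𝓝 (l1 + l2)) := by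
  have hdiv := ((dCC_vertical_isEquivalent hF hF_nonneg hl1 hl2 hequiv).mono
    nhdsWithin_le_nhds).div (IsEquivalent.refl (u := fun α : ℝ ↦ |α|) (l := 𝓝[≠] 0))
  refine hdiv.symm.tendsto_nhds (tendsto_const_nhds.congr' ?_)
  filter_upwards [self_mem_nhdsWithin] with α hα
  exact (mul_div_cancel_right₀ _ (abs_ne_zero.2 hα)).symm

theorem sqrt_isEquivalent_wellModel {W : ℝ × ℝ → ℝ} (hl1 : 0 < l1) (hl2 : 0 < l2)
    (hW : (fun p ↦ W p - wellModel l1 l2 p ^ 2) =o[𝓝 0] fun p ↦ enorm2 p ^ 2) :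
    (fun p ↦ √(W p)) ~[𝓝 0] wellModel l1 l2 := by
  have enorm2_isBigO : enorm2 =O[𝓝 0] wellModel l1 l2 := by
    refine IsBigO.of_bound (min l1 l2)⁻¹ (.of_forall fun p ↦ ?_)
    rw [Real.norm_of_nonneg (enorm2_nonneg p), Real.norm_of_nonneg (wellModel_nonneg p),
      le_inv_mul_iff₀ (lt_min hl1 hl2)]
    exact min_mul_enorm2_le_wellModel hl1.le hl2.le p
  have hsq : W ~[𝓝 0] fun p ↦ wellModel l1 l2 p ^ 2 := hW.trans_isBigO (enorm2_isBigO.pow 2)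
  have hsqrt := hsq.rpow (fun p ↦ sq_nonneg _) (r := 1 / 2)
  simpa only [Pi.pow_def, ← Real.sqrt_eq_rpow, Real.sqrt_sq (wellModel_nonneg _)]
    using hsqrt

theorem isLittleO_enorm2_sq_of_abs_le_cube {f : ℝ × ℝ → ℝ} {C δ : ℝ} (hδ : 0 < δ)
    (hf : ∀ p, enorm2 p ≤ δ → |f p| ≤ C * enorm2 p ^ 3) :
    f =o[𝓝 0] fun p ↦ enorm2 p ^ 2 := by
  have enorm2_tendsto : Tendsto enorm2 (𝓝 0) (𝓝 0) :=
    continuous_enorm2.tendsto' _ _ (by simp [enorm2])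
  have hf_isBigO : f =O[𝓝 0] fun p ↦ enorm2 p ^ 3 := by
    refine IsBigO.of_bound C ?_
    filter_upwards [enorm2_tendsto.eventually_le_const hδ] with p hp
    simpa [abs_of_nonneg (enorm2_nonneg p)] using hf p hp
  exact hf_isBigO.trans_isLittleO
    ((isLittleO_pow_pow (by norm_num)).comp_tendsto enorm2_tendsto)

end VerticalDistance

/-- with the well `p₋` at the origin and `W` agreeing with the quadratic
`λ₁²p₁² + λ₂²p₂²` to third order, the cost per unit area of vertical segments over the well is
`λ₁ + λ₂`: as `α → 0`, `d_F((0,0,0),(0,0,α))/|α| → λ₁ + λ₂`, and equivalently for the infimum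
of degenerate lengths of loops at the origin enclosing area `α`. -/
theorem vertical_rate
    (W : ℝ × ℝ → ℝ) (pp : ℝ × ℝ) (hW : TwoWell W (0, 0) pp)
    (F : ℝ × ℝ → ℝ) (hF : F = fun p => Real.sqrt (W p))
    (l1 l2 C δ : ℝ) (hl1 : 0 < l1) (hl2 : 0 < l2) (hC : 0 < C) (hδ : 0 < δ)
    (htaylor : ∀ p : ℝ × ℝ, enorm2 p ≤ δ →
      |W p - l1 ^ 2 * p.1 ^ 2 - l2 ^ 2 * p.2 ^ 2| ≤ C * enorm2 p ^ 3) :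
    Tendsto (fun α =>
        sInf { x | ∃ a b γ, IsCurve a b γ (0, 0) (0, 0) ∧ sArea a b γ = α ∧
          degLen F a b γ = x } / |α|)
      (𝓝[≠] (0:ℝ)) (𝓝 (l1 + l2)) ∧
    Tendsto (fun α => dCC F (0, 0, 0) (0, 0, α) / |α|) (𝓝[≠] (0:ℝ)) (𝓝 (l1 + l2)) := by
  have hequiv : F ~[𝓝 0] wellModel l1 l2 := by
    rw [hF]
    refine sqrt_isEquivalent_wellModel hl1 hl2 (isLittleO_enorm2_sq_of_abs_le_cube (C := C) hδ ?_)
    simpa only [wellModel_sq, ← sub_sub] using htaylor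
  have hF_continuous : Continuous F := hF ▸ hW.smooth.continuous.sqrt
  have hF_nonneg : ∀ p, 0 ≤ F p := fun p ↦ hF ▸ Real.sqrt_nonneg (W p)
  have hrate := vertical_rate_general hF_continuous hF_nonneg hl1 hl2 hequiv
  exact ⟨by simpa only [dCC, sub_zero] using hrate, hrate⟩
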